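/- (Theorem 1.) Let d ≥ 1, let w ∈ ℝ^d with w ≠ 0, b ∈ ℝ, ε > 0, and consider balanced Gaussian mixture data with means μ₊, μ₋ and σ > 0. Define the overall adversarial rate p_adv = (1/2)·P_{N(μ₊,σ²I_d)}({x : w·x + b > 0 and there exists v with ‖v‖₂ ≤ ε and w·(x+v) + b ≤ 0}) + (1/2)·P_{N(μ₋,σ²I_d)}({x : w·x + b ≤ 0 and there exists v with ‖v‖₂ ≤ ε and w·(x+v) + b > 0}). Then p_adv = 1 − p_m − (1/2)[Φ((w·μ + b')/(‖w‖₂σ) − ε/σ) + Φ((w·μ − b')/(‖w‖₂σ) − ε/σ)], where p_m = 1 − (1/2)[Φ((w·μ + b')/(‖w‖₂σ)) + Φ((w·μ − b')/(‖w‖₂σ))] is the misclassification rate. -/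

import Mathlib

open MeasureTheory ProbabilityTheory
open scoped ENNReal NNReal

/-- Euclidean inner product on `ℝ^d`. -/
noncomputable def dotp {d : ℕ} (w x : Fin d → ℝ) : ℝ := ∑ i, w i * x i

/-- The `ℓ₂` norm on `ℝ^d`. -/
noncomputable def l2 {d : ℕ} (w : Fin d → ℝ) : ℝ := Real.sqrt (∑ i, (w i)^2)

/-- The product Gaussian measure `N(m, σ²I_d)` on `ℝ^d`. -/
noncomputable def gaussPi {d : ℕ} (m : Fin d → ℝ) (σ : ℝ) : Measure (Fin d → ℝ) :=
  Measure.pi fun i => gaussianReal (m i) ((σ^2).toNNReal)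

/-- The standard normal cumulative distribution function `Φ`. -/
noncomputable def Phi (x : ℝ) : ℝ := ((gaussianReal 0 1) (Set.Iic x)).toReal

/-- The `ℓp` norm on `ℝ^d` for `p ∈ [1,∞]` (as an extended real exponent). -/
noncomputable def lpnorm {d : ℕ} (p : ℝ≥0∞) (v : Fin d → ℝ) : ℝ :=
  if p = ∞ then ⨆ i, |v i| else (∑ i, |v i| ^ p.toReal) ^ (1 / p.toReal)

/-- The `ℓp` norm on `ℝ^d` for a real exponent `p ∈ [1,∞)`. -/
noncomputable def lpR {d : ℕ} (p : ℝ) (v : Fin d → ℝ) : ℝ := (∑ i, |v i| ^ p) ^ (1/p)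

/-!
Perturbations of size at most `ε` move the score `w·x + b` by any amount up to `‖w‖₂ ε` and no more,
so a correctly classified point can be attacked exactly when its score lies in a strip of width
`‖w‖₂ ε` next to the decision boundary. Under `N(m, σ²I_d)` the score is a real Gaussian with mean
`w·m + b` and standard deviation `‖w‖₂ σ`, and the mass of the strip is a difference of two values
of `Φ`.
-/

section Perturbation

open scoped RealInnerProductSpace

variable {E : Type*} [SeminormedAddCommGroup E] [InnerProductSpace ℝ E] {r : ℝ}

lemma exists_norm_le_inner_eq_norm_mul (w : E) (hr : 0 ≤ r) :
    ∃ v : E, ‖v‖ ≤ r ∧ ⟪w, v⟫ = ‖w‖ * r := by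
  rcases eq_or_ne ‖w‖ 0 with hw | hw
  · exact ⟨0, by simpa using hr, by simp [hw]⟩
  · refine ⟨(r / ‖w‖) • w, ?_, ?_⟩
    · rw [norm_smul, norm_div, norm_norm, div_mul_cancel₀ _ hw, Real.norm_of_nonneg hr]
    · rw [real_inner_smul_right, real_inner_self_eq_norm_mul_norm]
      field_simp

lemma exists_norm_le_lt_inner_add_iff (w x : E) (hr : 0 ≤ r) {a : ℝ} :
    (∃ v, ‖v‖ ≤ r ∧ a < ⟪w, x + v⟫) ↔ a < ⟪w, x⟫ + ‖w‖ * r := by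
  constructor
  · rintro ⟨v, hv, h⟩
    calc a < ⟪w, x⟫ + ⟪w, v⟫ := by rwa [← inner_add_right]
      _ ≤ ⟪w, x⟫ + ‖w‖ * ‖v‖ := by gcongr; exact real_inner_le_norm w v
      _ ≤ ⟪w, x⟫ + ‖w‖ * r := by gcongr
  · intro h
    obtain ⟨v, hv, hwv⟩ := exists_norm_le_inner_eq_norm_mul w hr
    exact ⟨v, hv, by rwa [inner_add_right, hwv]⟩

lemma exists_norm_le_inner_add_le_iff (w x : E) (hr : 0 ≤ r) {a : ℝ} :
    (∃ v, ‖v‖ ≤ r ∧ ⟪w, x + v⟫ ≤ a) ↔ ⟪w, x⟫ - ‖w‖ * r ≤ a := by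
  constructor
  · rintro ⟨v, hv, h⟩
    calc ⟪w, x⟫ - ‖w‖ * r ≤ ⟪w, x⟫ - ‖w‖ * ‖v‖ := by gcongr
      _ ≤ ⟪w, x⟫ + ⟪w, v⟫ := by linarith [neg_le_of_abs_le (abs_real_inner_le_norm w v)]
      _ ≤ a := by rwa [← inner_add_right]
  · intro h
    obtain ⟨v, hv, hwv⟩ := exists_norm_le_inner_eq_norm_mul w hr
    exact ⟨-v, by rwa [norm_neg], by rwa [inner_add_right, inner_neg_right, hwv, ← sub_eq_add_neg]⟩

end Perturbation

section Gaussian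

lemma gaussianReal_real_Iic (m t : ℝ) {v : ℝ≥0} (hv : v ≠ 0) :
    (gaussianReal m v).real (Set.Iic t) = Phi ((t - m) / √v) := by
  have hsqrt : 0 < √(v : ℝ) := Real.sqrt_pos.2 (NNReal.coe_pos.2 hv.bot_lt)
  have standardized : HasLaw (fun x ↦ (x - m) / √v) (gaussianReal 0 1) (gaussianReal m v) := by
    convert! gaussianReal_div_const (gaussianReal_sub_const HasLaw.id m) √v using 2
    · simp
    · ext
      simp [hv]
  calc (gaussianReal m v).real (Set.Iic t)
      = (gaussianReal m v).real {x | (x - m) / √v ≤ (t - m) / √v} := by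
        simp only [div_le_div_iff_of_pos_right hsqrt, sub_le_sub_iff_right, Set.Iic]
    _ = Phi ((t - m) / √v) := standardized.measureReal_eq measurableSet_Iic

lemma gaussianReal_real_Ioc (m : ℝ) {v : ℝ≥0} (hv : v ≠ 0) {s t : ℝ} (hst : s ≤ t) :
    (gaussianReal m v).real (Set.Ioc s t) = Phi ((t - m) / √v) - Phi ((s - m) / √v) := by
  rw [← gaussianReal_real_Iic m t hv, ← gaussianReal_real_Iic m s hv,
    ← measureReal_sdiff (Set.Iic_subset_Iic.2 hst) measurableSet_Iic, Set.Iic_sdiff_Iic]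

lemma Phi_neg (x : ℝ) : Phi (-x) = 1 - Phi x := by
  have : NullSingletonClass (gaussianReal 0 1) := nullSingletonClass_gaussianReal one_ne_zero
  have symmetric : HasLaw (fun y ↦ -y) (gaussianReal 0 1) (gaussianReal 0 1) :=
    ⟨by fun_prop, by rw [gaussianReal_map_neg, neg_zero]⟩
  calc Phi (-x) = (gaussianReal 0 1).real {y | -y ≤ -x} :=
        (symmetric.measureReal_eq measurableSet_Iic).symm
    _ = (gaussianReal 0 1).real (Set.Ici x) := by simp only [neg_le_neg_iff, Set.Ici]
    _ = (gaussianReal 0 1).real (Set.Iic x)ᶜ := by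
        rw [Set.compl_Iic, measureReal_congr Ioi_ae_eq_Ici]
    _ = 1 - Phi x := probReal_compl_eq_one_sub measurableSet_Iic

lemma hasLaw_sum_gaussianReal_of_iIndepFun {Ω ι : Type*} [Fintype ι] {mΩ : MeasurableSpace Ω}
    {P : Measure Ω} {X : ι → Ω → ℝ} {m : ι → ℝ} {v : ι → ℝ≥0}
    (hX : ∀ i, HasLaw (X i) (gaussianReal (m i) (v i)) P) (hindep : iIndepFun X P) :
    HasLaw (fun ω ↦ ∑ i, X i ω) (gaussianReal (∑ i, m i) (∑ i, v i)) P := by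
  have := hindep.isProbabilityMeasure
  have hgauss (i : ι) : HasGaussianLaw (X i) P := ⟨by rw [(hX i).map_eq]; infer_instance⟩
  have hsum := hindep.hasGaussianLaw_fun_sum hgauss
  have hmean : P[fun ω ↦ ∑ i, X i ω] = ∑ i, m i := by
    rw [integral_finsetSum _ fun i _ ↦ (hgauss i).integrable]
    exact Finset.sum_congr rfl fun i _ ↦ (hX i).integral_eq.trans integral_id_gaussianReal
  have hvar : Var[fun ω ↦ ∑ i, X i ω; P] = ∑ i, (v i : ℝ) := by
    rw [← Finset.sum_fn, IndepFun.variance_sum (fun i _ ↦ (hgauss i).memLp_two)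
      fun i _ j _ hij ↦ hindep.indepFun hij]
    exact Finset.sum_congr rfl fun i _ ↦ (hX i).variance_eq.trans variance_id_gaussianReal
  refine ⟨hsum.aemeasurable, ?_⟩
  rw [hsum.map_eq_gaussianReal, hmean, hvar, ← NNReal.coe_sum, Real.toNNReal_coe]

lemma hasLaw_sum_mul_pi_gaussianReal {ι : Type*} [Fintype ι] (w m : ι → ℝ) (v : ι → ℝ≥0) :
    HasLaw (fun x : ι → ℝ ↦ ∑ i, w i * x i)
      (gaussianReal (∑ i, w i * m i) (∑ i, .mk (w i ^ 2) (sq_nonneg _) * v i))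
      (Measure.pi fun i ↦ gaussianReal (m i) (v i)) :=
  hasLaw_sum_gaussianReal_of_iIndepFun
    (fun i ↦ gaussianReal_const_mul
      (measurePreserving_eval (fun i ↦ gaussianReal (m i) (v i)) i).hasLaw (w i))
    (iIndepFun_pi (X := fun i y ↦ w i * y) fun _ ↦ by fun_prop)

end Gaussian

section LinearClassifier

variable {d : ℕ}

lemma dotp_eq_inner (w x : Fin d → ℝ) : dotp w x = inner ℝ (WithLp.toLp 2 w) (WithLp.toLp 2 x) := by
  simp [dotp, PiLp.inner_apply, mul_comm]

lemma dotp_add (w x y : Fin d → ℝ) : dotp w (x + y) = dotp w x + dotp w y := by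
  simp only [dotp_eq_inner, WithLp.toLp_add, inner_add_right]

lemma dotp_sub (w x y : Fin d → ℝ) : dotp w (x - y) = dotp w x - dotp w y := by
  simp only [dotp_eq_inner, WithLp.toLp_sub, inner_sub_right]

lemma dotp_smul (w : Fin d → ℝ) (c : ℝ) (x : Fin d → ℝ) : dotp w (c • x) = c * dotp w x := by
  simp only [dotp_eq_inner, WithLp.toLp_smul, real_inner_smul_right]

lemma l2_eq_norm (w : Fin d → ℝ) : l2 w = ‖WithLp.toLp 2 w‖ := by
  simp [l2, EuclideanSpace.norm_eq]

lemma l2_pos {w : Fin d → ℝ} (hw : w ≠ 0) : 0 < l2 w := by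
  simpa [l2_eq_norm] using hw

lemma pos_and_exists_attack_iff (w x : Fin d → ℝ) (b : ℝ) {ε : ℝ} (hε : 0 ≤ ε) :
    (0 < dotp w x + b ∧ ∃ v, l2 v ≤ ε ∧ dotp w (x + v) + b ≤ 0) ↔
      dotp w x + b ∈ Set.Ioc 0 (l2 w * ε) := by
  have attack := exists_norm_le_inner_add_le_iff (WithLp.toLp 2 w) (WithLp.toLp 2 x) hε (a := -b)
  rw [(WithLp.toLp_surjective 2).exists] at attack
  simp only [← WithLp.toLp_add, ← dotp_eq_inner, ← l2_eq_norm,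
    le_neg_iff_add_nonpos_right] at attack
  rw [attack, Set.mem_Ioc, sub_add_eq_add_sub, sub_nonpos]

lemma nonpos_and_exists_attack_iff (w x : Fin d → ℝ) (b : ℝ) {ε : ℝ} (hε : 0 ≤ ε) :
    (dotp w x + b ≤ 0 ∧ ∃ v, l2 v ≤ ε ∧ 0 < dotp w (x + v) + b) ↔
      dotp w x + b ∈ Set.Ioc (-(l2 w * ε)) 0 := by
  have attack := exists_norm_le_lt_inner_add_iff (WithLp.toLp 2 w) (WithLp.toLp 2 x) hε (a := -b)
  rw [(WithLp.toLp_surjective 2).exists] at attack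
  simp only [← WithLp.toLp_add, ← dotp_eq_inner, ← l2_eq_norm, neg_lt_iff_pos_add] at attack
  rw [attack, Set.mem_Ioc, and_comm, neg_lt_iff_pos_add, add_right_comm]

lemma hasLaw_dotp_add_gaussPi (w m : Fin d → ℝ) (b σ : ℝ) :
    HasLaw (fun x ↦ dotp w x + b) (gaussianReal (dotp w m + b) ((l2 w * σ) ^ 2).toNNReal)
      (gaussPi m σ) := by
  have hvar : ((l2 w * σ) ^ 2).toNNReal =
      ∑ i, .mk (w i ^ 2) (sq_nonneg _) * (σ ^ 2).toNNReal := by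
    ext
    simp [l2, mul_pow, Real.sq_sqrt (Finset.sum_nonneg fun i _ ↦ sq_nonneg (w i)), sq_nonneg,
      Finset.sum_mul, Finset.sum_nonneg, mul_nonneg]
  rw [hvar]
  exact gaussianReal_add_const (hasLaw_sum_mul_pi_gaussianReal w m _) b

lemma gaussPi_real_dotp_add_mem_Ioc {w : Fin d → ℝ} (hw : w ≠ 0) (m : Fin d → ℝ) (b : ℝ) {σ : ℝ}
    (hσ : 0 < σ) {s t : ℝ} (hst : s ≤ t) :
    (gaussPi m σ).real {x | dotp w x + b ∈ Set.Ioc s t} =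
      Phi ((t - (dotp w m + b)) / (l2 w * σ)) - Phi ((s - (dotp w m + b)) / (l2 w * σ)) := by
  have hpos : 0 < l2 w * σ := mul_pos (l2_pos hw) hσ
  have hvar : ((l2 w * σ) ^ 2).toNNReal ≠ 0 := (Real.toNNReal_pos.2 (pow_pos hpos 2)).ne'
  have hsqrt : √(((l2 w * σ) ^ 2).toNNReal : ℝ) = l2 w * σ := by
    rw [Real.coe_toNNReal _ (sq_nonneg _), Real.sqrt_sq hpos.le]
  calc (gaussPi m σ).real {x | dotp w x + b ∈ Set.Ioc s t}
      = (gaussianReal (dotp w m + b) ((l2 w * σ) ^ 2).toNNReal).real (Set.Ioc s t) :=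
        (hasLaw_dotp_add_gaussPi w m b σ).measureReal_eq measurableSet_Ioc
    _ = _ := by rw [gaussianReal_real_Ioc _ hvar hst, hsqrt]

lemma gaussPi_real_pos_and_exists_attack {w : Fin d → ℝ} (hw : w ≠ 0) (m : Fin d → ℝ)
    (b : ℝ) {ε σ : ℝ} (hε : 0 ≤ ε) (hσ : 0 < σ) :
    (gaussPi m σ).real {x | 0 < dotp w x + b ∧ ∃ v, l2 v ≤ ε ∧ dotp w (x + v) + b ≤ 0} =
      Phi ((dotp w m + b) / (l2 w * σ)) - Phi ((dotp w m + b) / (l2 w * σ) - ε / σ) := by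
  have hl2 := l2_pos hw
  simp only [pos_and_exists_attack_iff w _ b hε]
  have upper : (l2 w * ε - (dotp w m + b)) / (l2 w * σ) =
      -((dotp w m + b) / (l2 w * σ) - ε / σ) := by
    rw [sub_div, mul_div_mul_left _ _ hl2.ne', neg_sub]
  rw [gaussPi_real_dotp_add_mem_Ioc hw m b hσ (by positivity), upper, zero_sub, neg_div, Phi_neg,
    Phi_neg, sub_sub_sub_cancel_left]

lemma gaussPi_real_nonpos_and_exists_attack {w : Fin d → ℝ} (hw : w ≠ 0) (m : Fin d → ℝ)
    (b : ℝ) {ε σ : ℝ} (hε : 0 ≤ ε) (hσ : 0 < σ) :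
    (gaussPi m σ).real {x | dotp w x + b ≤ 0 ∧ ∃ v, l2 v ≤ ε ∧ 0 < dotp w (x + v) + b} =
      Phi (-(dotp w m + b) / (l2 w * σ)) - Phi (-(dotp w m + b) / (l2 w * σ) - ε / σ) := by
  have hl2 := l2_pos hw
  simp only [nonpos_and_exists_attack_iff w _ b hε]
  have lower : (-(l2 w * ε) - (dotp w m + b)) / (l2 w * σ) =
      -(dotp w m + b) / (l2 w * σ) - ε / σ := by
    rw [neg_sub_left, neg_add', sub_div, mul_div_mul_left _ _ hl2.ne']
  rw [gaussPi_real_dotp_add_mem_Ioc hw m b hσ (neg_nonpos.2 (by positivity)), lower, zero_sub]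

end LinearClassifier

/-- Theorem 1: the overall adversarial rate of a linear classifier
for balanced Gaussian mixture data. -/
theorem adversarial_rate {d : ℕ} (hd : 1 ≤ d)
    (w : Fin d → ℝ) (hw : w ≠ 0) (b ε : ℝ) (hε : 0 < ε)
    (μp μm : Fin d → ℝ) (σ : ℝ) (hσ : 0 < σ)
    (μ μbar : Fin d → ℝ) (b' : ℝ)
    (hμ : μ = (1/2 : ℝ) • (μp - μm)) (hμbar : μbar = (1/2 : ℝ) • (μp + μm))
    (hb' : b' = dotp w μbar + b)
    (padv pm : ℝ)
    (hpadv : padv =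
        (1/2) * ((gaussPi μp σ) {x : Fin d → ℝ | 0 < dotp w x + b ∧
            ∃ v : Fin d → ℝ, l2 v ≤ ε ∧ dotp w (x + v) + b ≤ 0}).toReal
      + (1/2) * ((gaussPi μm σ) {x : Fin d → ℝ | dotp w x + b ≤ 0 ∧
            ∃ v : Fin d → ℝ, l2 v ≤ ε ∧ 0 < dotp w (x + v) + b}).toReal)
    (hpm : pm = 1 - (1/2) * (Phi ((dotp w μ + b') / (l2 w * σ)) +
                              Phi ((dotp w μ - b') / (l2 w * σ)))) :
    padv = 1 - pm - (1/2) * (Phi ((dotp w μ + b') / (l2 w * σ) - ε / σ) +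
                              Phi ((dotp w μ - b') / (l2 w * σ) - ε / σ)) := by
  have mean_pos : dotp w μ + b' = dotp w μp + b := by
    rw [hb', hμ, hμbar, dotp_smul, dotp_smul, dotp_sub, dotp_add]; ring
  have mean_neg : dotp w μ - b' = -(dotp w μm + b) := by
    rw [hb', hμ, hμbar, dotp_smul, dotp_smul, dotp_sub, dotp_add]; ring
  rw [hpadv, hpm, mean_pos, mean_neg, ← measureReal_def, ← measureReal_def,
    gaussPi_real_pos_and_exists_attack hw μp b hε.le hσ,
    gaussPi_real_nonpos_and_exists_attack hw μm b hε.le hσ]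
  ring
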